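/- arXiv:1606.01191 — 3 statements merged into one kernel-verified Lean document; each statement's English description precedes it below -/
import Mathlib

section
/- Let λ: λ_1 ≥ … ≥ λ_n be a non-increasing sequence of integers and let μ ∈ ℤ^n be such that λ majorizes μ. If P is a Gelfand–Tsetlin pattern with bounding sequence λ and weight μ such that for every 1 ≤ j ≤ n the j-th row of P majorizes the j-th row of every Gelfand–Tsetlin pattern with bounding sequence λ and weight μ, then all entries of P are integers. -/
/-!
Among the patterns with bounding sequence `lam` and weight `mu` there is an explicit greedy one.
Writing `S j k` for the sum of the first `k` entries of its row `j`, it is given by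
`S n k = lam 1 + ⋯ + lam k` and `S (j - 1) k = min (S j k) (S j (k + 1) - mu j)`.

Concavity of `k ↦ S j k` gives the interlacing conditions (`greedy_concave`, `greedy_step`).
In any pattern with the given data, the first `k` entries of row `j - 1` sum to at most the first
`k` entries of row `j`, and to at most the first `k + 1` entries of row `j` minus `mu j`. Hence
the greedy partial sums dominate those of every such pattern, and the existence of one such pattern
forces the boundary values `S j 0 = 0` and `S j j = mu 1 + ⋯ + mu j` (`greedy_dominates`).
So the greedy pattern is a pattern with the required weight, and it majorizes every other one row
by row. A pattern `L` with the same maximality has the same partial sums, thus the same entries,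
and the recursion preserves integrality.
-/

open Finset

/-- `x` is non-increasing on the indices `1, …, n`. -/
def NonIncr (n : ℕ) (x : ℕ → ℝ) : Prop :=
  ∀ i, 1 ≤ i → i + 1 ≤ n → x (i + 1) ≤ x i

/-- `x` (viewed as a sequence indexed by `1, …, n`) majorizes `y`:
for every `k ≤ n` the sum of the `k` largest entries of `x` is at least the sum of the `k`
largest entries of `y` (expressed here by saying that every `k`-element partial sum of `y`
is dominated by some `k`-element partial sum of `x`), and the total sums agree. -/
def Maj (n : ℕ) (x y : ℕ → ℝ) : Prop :=
  (∀ B : Finset ℕ, B ⊆ Finset.Icc 1 n →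
    ∃ A : Finset ℕ, A ⊆ Finset.Icc 1 n ∧ A.card = B.card ∧
      ∑ i ∈ B, y i ≤ ∑ i ∈ A, x i) ∧
  ∑ i ∈ Finset.Icc 1 n, x i = ∑ i ∈ Finset.Icc 1 n, y i

/-- The sequence `lam` of length `n` and the sequence `mu` of length `n - 1` interlace:
`lam i ≥ mu i ≥ lam (i+1)` for `1 ≤ i ≤ n - 1`. -/
def Interlaces (n : ℕ) (lam mu : ℕ → ℝ) : Prop :=
  ∀ i, 1 ≤ i → i + 1 ≤ n → mu i ≤ lam i ∧ lam (i + 1) ≤ mu i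

/-- A Gelfand–Tsetlin pattern of size `n`: `L j i` is the `i`-th entry (`1 ≤ i ≤ j`) of
row `j` (`1 ≤ j ≤ n`); each row is non-increasing and row `j` interlaces row `j + 1`. -/
def IsGTPattern (n : ℕ) (L : ℕ → ℕ → ℝ) : Prop :=
  (∀ j, 1 ≤ j → j ≤ n → NonIncr j (L j)) ∧
  (∀ j, 1 ≤ j → j + 1 ≤ n → Interlaces (j + 1) (L (j + 1)) (L j))

/-- Sum of the entries of row `j` of a pattern. -/
def rowSum (L : ℕ → ℕ → ℝ) (j : ℕ) : ℝ := ∑ i ∈ Finset.Icc 1 j, L j i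

/-- The pattern `L` (of size `n`) has weight `mu`. -/
def HasWeight (n : ℕ) (L : ℕ → ℕ → ℝ) (mu : ℕ → ℝ) : Prop :=
  ∀ j, 1 ≤ j → j ≤ n → rowSum L j - rowSum L (j - 1) = mu j

/-- The pattern `L` (of size `n`) has bounding sequence `lam`. -/
def HasBounding (n : ℕ) (L : ℕ → ℕ → ℝ) (lam : ℕ → ℝ) : Prop :=
  ∀ i, 1 ≤ i → i ≤ n → L n i = lam i

/-- `lam` (length `n`) weakly interlaces `mu` (length `n - 1`): for every nonempty subset
`S` of `{1, …, n-1}` of cardinality `j`, `lam 1 + ⋯ + lam j ≥ ∑_{i ∈ S} mu i ≥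
lam (n-j+1) + ⋯ + lam n`. -/
def WeaklyInterlaces (n : ℕ) (lam mu : ℕ → ℝ) : Prop :=
  ∀ S : Finset ℕ, S ⊆ Finset.Icc 1 (n - 1) → S.Nonempty →
    ∑ i ∈ S, mu i ≤ ∑ i ∈ Finset.Icc 1 S.card, lam i ∧
    ∑ i ∈ Finset.Icc (n - S.card + 1) n, lam i ≤ ∑ i ∈ S, mu i

/-- Triangular area of an interlacing pair (`lam` of length `n`, `mu` of length `n-1`). -/
def triArea (n : ℕ) (lam mu : ℕ → ℝ) : ℝ :=
  ∑ i ∈ Finset.Icc 1 (n - 1), (lam i - mu i) * (mu i - lam (i + 1))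

/-- Trapezoidal area of an interlacing pair (`lam` of length `n`, `mu` of length `n-1`). -/
def trapArea (n : ℕ) (lam mu : ℕ → ℝ) : ℝ :=
  ∑ i ∈ Finset.Icc 1 (n - 1), ∑ j ∈ Finset.Icc i (n - 1),
    (lam i - mu i) * (mu j - lam (j + 1))

/-- Triangular area of a pattern of size `n`. -/
def patTriArea (n : ℕ) (L : ℕ → ℕ → ℝ) : ℝ :=
  ∑ j ∈ Finset.Icc 1 (n - 1), triArea (j + 1) (L (j + 1)) (L j)

/-- Trapezoidal area of a pattern of size `n`. -/
def patTrapArea (n : ℕ) (L : ℕ → ℕ → ℝ) : ℝ :=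
  ∑ j ∈ Finset.Icc 1 (n - 1), trapArea (j + 1) (L (j + 1)) (L j)

/-- `‖x‖²` for a sequence indexed by `1, …, n`. -/
def normSq (n : ℕ) (x : ℕ → ℝ) : ℝ := ∑ i ∈ Finset.Icc 1 n, (x i) ^ 2

/-- All entries `x 1, …, x n` are integers. -/
def IsIntegralSeq (n : ℕ) (x : ℕ → ℝ) : Prop :=
  ∀ i, 1 ≤ i → i ≤ n → ∃ z : ℤ, x i = (z : ℝ)

/-- Sum of the first `k` entries of row `n - d` of the greedy pattern with bounding sequence `lam`
and weight `mu`; the rows are indexed from the top by `d`. -/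
noncomputable def greedy (n : ℕ) (lam mu : ℕ → ℝ) : ℕ → ℕ → ℝ
  | 0, k => ∑ i ∈ Finset.Icc 1 k, lam i
  | d + 1, k => min (greedy n lam mu d k) (greedy n lam mu d (k + 1) - mu (n - d))

/-- Entries of the greedy pattern, as differences of consecutive partial sums. -/
noncomputable def greedyPat (n : ℕ) (lam mu : ℕ → ℝ) (j i : ℕ) : ℝ :=
  greedy n lam mu (n - j) i - greedy n lam mu (n - j) (i - 1)

lemma sum_Icc_one_succ (x : ℕ → ℝ) (k : ℕ) :
    ∑ i ∈ Finset.Icc 1 (k + 1), x i = ∑ i ∈ Finset.Icc 1 k, x i + x (k + 1) :=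
  Finset.sum_Icc_succ_top (by omega) x

lemma NonIncr.le_of_le {n : ℕ} {x : ℕ → ℝ} (h : NonIncr n x) {a b : ℕ} (ha : 1 ≤ a)
    (hab : a ≤ b) (hb : b ≤ n) : x b ≤ x a := by
  induction b, hab using Nat.le_induction with
  | base => exact le_rfl
  | succ b hab ih => exact (h b (by omega) hb).trans (ih (by omega))

/-- For a non-increasing sequence, the initial segment has the largest sum among index sets
of a given size. -/
lemma sum_le_sum_initial {n : ℕ} {x : ℕ → ℝ} (h : NonIncr n x) (A : Finset ℕ)
    (hA : A ⊆ Finset.Icc 1 n) : ∑ i ∈ A, x i ≤ ∑ i ∈ Finset.Icc 1 A.card, x i := by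
  induction n generalizing A with
  | zero =>
    have : A = ∅ := by simpa using hA
    simp [this]
  | succ n ih =>
    have h' : NonIncr n x := fun i h1 h2 => h i h1 (by omega)
    have hsub : A.erase (n + 1) ⊆ Finset.Icc 1 n := by
      intro i hi
      have h1 := Finset.mem_erase.1 hi
      have h2 := Finset.mem_Icc.1 (hA h1.2)
      have h3 := h1.1
      exact Finset.mem_Icc.2 ⟨h2.1, by omega⟩
    by_cases hm : n + 1 ∈ A
    · have h1 := ih h' _ hsub
      have hc := Finset.card_erase_add_one hm
      have hcard : A.card ≤ n + 1 := by simpa using Finset.card_le_card hA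
      have hx := h.le_of_le (a := A.card) (b := n + 1) (by omega) hcard le_rfl
      rw [← Finset.sum_erase_add _ _ hm, ← hc, sum_Icc_one_succ, hc]
      linarith
    · rw [Finset.erase_eq_of_notMem hm] at hsub
      exact ih h' A hsub

/-- Each row of the greedy pattern is non-increasing, in terms of partial sums. -/
lemma greedy_concave {n : ℕ} {lam mu : ℕ → ℝ} (hlam : NonIncr n lam) (d k : ℕ)
    (hk : k + 2 + d ≤ n) :
    greedy n lam mu d (k + 2) + greedy n lam mu d k ≤ 2 * greedy n lam mu d (k + 1) := by
  induction d generalizing k with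
  | zero =>
    have := hlam (k + 1) (by omega) (by omega)
    simp only [greedy, sum_Icc_one_succ]
    linarith
  | succ d ih =>
    have h1 := ih k (by omega)
    have h2 := ih (k + 1) (by omega)
    simp only [greedy]
    grind

/-- Consecutive rows of the greedy pattern interlace, in terms of partial sums. -/
lemma greedy_step {n : ℕ} {lam mu : ℕ → ℝ} (hlam : NonIncr n lam) (d k : ℕ)
    (hk : k + 2 + d ≤ n) :
    greedy n lam mu (d + 1) (k + 1) - greedy n lam mu (d + 1) k ≤
        greedy n lam mu d (k + 1) - greedy n lam mu d k ∧
      greedy n lam mu d (k + 2) - greedy n lam mu d (k + 1) ≤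
        greedy n lam mu (d + 1) (k + 1) - greedy n lam mu (d + 1) k := by
  have h1 := greedy_concave (mu := mu) hlam d k hk
  simp only [greedy]
  grind

/-- The greedy partial sums dominate those of any pattern with the same data; the existence of
that pattern also yields the boundary values of the greedy partial sums. -/
lemma greedy_dominates {n : ℕ} {lam mu : ℕ → ℝ} {L : ℕ → ℕ → ℝ} (hL : IsGTPattern n L)
    (hb : HasBounding n L lam) (hw : HasWeight n L mu) (d : ℕ) (hd : d < n) :
    greedy n lam mu d 0 = 0 ∧ greedy n lam mu d (n - d) = rowSum L (n - d) ∧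
      ∀ k ≤ n - d, ∑ i ∈ Finset.Icc 1 k, L (n - d) i ≤ greedy n lam mu d k := by
  induction d with
  | zero =>
    have key : ∀ k ≤ n, ∑ i ∈ Finset.Icc 1 k, L n i = ∑ i ∈ Finset.Icc 1 k, lam i := by
      intro k hk
      refine Finset.sum_congr rfl fun i hi => ?_
      have := Finset.mem_Icc.1 hi
      exact hb i this.1 (by omega)
    exact ⟨by simp [greedy], (key n le_rfl).symm, fun k hk => (key k hk).le⟩
  | succ d ih =>
    obtain ⟨h0, htop, hdom⟩ := ih (by omega)
    obtain ⟨j, hj⟩ : ∃ j, n - d = j + 1 := ⟨n - d - 1, by omega⟩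
    have hj' : n - (d + 1) = j := by omega
    rw [hj] at htop hdom
    rw [hj']
    have hint := hL.2 j (by omega) (by omega)
    have hwj : rowSum L (j + 1) - rowSum L j = mu (j + 1) := hw (j + 1) (by omega) (by omega)
    have up : ∀ k ≤ j, ∑ i ∈ Finset.Icc 1 k, L j i ≤ ∑ i ∈ Finset.Icc 1 k, L (j + 1) i := by
      intro k hk
      refine Finset.sum_le_sum fun i hi => ?_
      have := Finset.mem_Icc.1 hi
      exact (hint i this.1 (by omega)).1
    -- the tails of row `j + 1` are bounded by the shifted tails of row `j`
    have tail : ∀ k ≤ j, ∑ i ∈ Finset.Icc 1 k, L j i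
        ≤ ∑ i ∈ Finset.Icc 1 (k + 1), L (j + 1) i - mu (j + 1) := by
      intro k hk
      induction hk using Nat.decreasingInduction with
      | self => simp only [rowSum] at hwj; linarith
      | of_succ k hk ih =>
        have := (hint (k + 1) (by omega) (by omega)).2
        rw [sum_Icc_one_succ, sum_Icc_one_succ _ (k + 1)] at ih
        linarith
    have dom : ∀ k ≤ j, ∑ i ∈ Finset.Icc 1 k, L j i ≤ greedy n lam mu (d + 1) k := by
      intro k hk
      simp only [greedy, hj]
      exact le_min ((up k hk).trans (hdom k (by omega)))
        ((tail k hk).trans (sub_le_sub_right (hdom (k + 1) (by omega)) _))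
    refine ⟨le_antisymm ?_ (by simpa using dom 0 (by omega)),
      le_antisymm ?_ (dom j le_rfl), dom⟩
    · simp only [greedy]
      exact (min_le_left _ _).trans h0.le
    · simp only [greedy, hj]
      exact (min_le_right _ _).trans (by linarith)

lemma greedy_int {n : ℕ} {lam mu : ℕ → ℝ} (hlam : IsIntegralSeq n lam)
    (hmu : IsIntegralSeq n mu) (d k : ℕ) (hk : k + d ≤ n) :
    ∃ z : ℤ, greedy n lam mu d k = z := by
  induction d generalizing k with
  | zero =>
    induction k with
    | zero => exact ⟨0, by simp [greedy]⟩
    | succ k ih =>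
      obtain ⟨a, ha⟩ := ih (by omega)
      obtain ⟨b, hb⟩ := hlam (k + 1) (by omega) (by omega)
      simp only [greedy] at ha ⊢
      exact ⟨a + b, by rw [sum_Icc_one_succ, ha, hb]; push_cast; rfl⟩
  | succ d ih =>
    obtain ⟨a, ha⟩ := ih k (by omega)
    obtain ⟨b, hb⟩ := ih (k + 1) (by omega)
    obtain ⟨c, hc⟩ := hmu (n - d) (by omega) (by omega)
    exact ⟨min a (b - c), by simp only [greedy, ha, hb, hc]; push_cast; rfl⟩

lemma sum_greedyPat (n : ℕ) (lam mu : ℕ → ℝ) (j k : ℕ) (h0 : greedy n lam mu (n - j) 0 = 0) :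
    ∑ i ∈ Finset.Icc 1 k, greedyPat n lam mu j i = greedy n lam mu (n - j) k := by
  induction k with
  | zero => simp [h0]
  | succ k ih => rw [sum_Icc_one_succ, ih]; simp [greedyPat]

lemma greedyPat_isGTPattern {n : ℕ} {lam mu : ℕ → ℝ} (hlam : NonIncr n lam) :
    IsGTPattern n (greedyPat n lam mu) := by
  constructor
  · intro j hj hjn i hi hij
    obtain ⟨k, rfl⟩ : ∃ k, i = k + 1 := ⟨i - 1, by omega⟩
    have := greedy_concave (mu := mu) hlam (n - j) k (by omega)
    simp only [greedyPat, Nat.add_sub_cancel]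
    linarith
  · intro j hj hjn i hi hij
    obtain ⟨k, rfl⟩ : ∃ k, i = k + 1 := ⟨i - 1, by omega⟩
    have := greedy_step (mu := mu) hlam (n - (j + 1)) k (by omega)
    have e : n - j = n - (j + 1) + 1 := by omega
    simp only [greedyPat, Nat.add_sub_cancel, e]
    exact this

/-- If `lam` and `μ` are integral and the pattern `L` with bounding
sequence `lam` and weight `μ` majorizes row-wise every pattern with the same bounding
sequence and weight, then all entries of `L` are integers. -/
theorem stmt1 (n : ℕ) (lam mu : ℕ → ℝ) (hlam : NonIncr n lam)
    (hlamInt : IsIntegralSeq n lam) (hmuInt : IsIntegralSeq n mu)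
    (hmaj : Maj n lam mu)
    (L : ℕ → ℕ → ℝ) (hL : IsGTPattern n L) (hb : HasBounding n L lam)
    (hw : HasWeight n L mu)
    (hmax : ∀ K : ℕ → ℕ → ℝ, IsGTPattern n K → HasBounding n K lam → HasWeight n K mu →
      ∀ j, 1 ≤ j → j ≤ n → Maj j (L j) (K j)) :
    ∀ j i, 1 ≤ i → i ≤ j → j ≤ n → ∃ z : ℤ, L j i = (z : ℝ) := by
  have hG : ∀ j, 1 ≤ j → j ≤ n → greedy n lam mu (n - j) 0 = 0 ∧
      greedy n lam mu (n - j) j = rowSum L j ∧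
      ∀ k ≤ j, ∑ i ∈ Finset.Icc 1 k, L j i ≤ greedy n lam mu (n - j) k := by
    intro j hj hjn
    have := greedy_dominates hL hb hw (n - j) (by omega)
    rwa [Nat.sub_sub_self hjn] at this
  have hrow : ∀ j, j ≤ n → rowSum (greedyPat n lam mu) j = rowSum L j := by
    intro j hjn
    rcases Nat.eq_zero_or_pos j with rfl | hj
    · simp [rowSum]
    · have h := hG j hj hjn
      rw [← h.2.1, rowSum, sum_greedyPat n lam mu j j h.1]
  have hKb : HasBounding n (greedyPat n lam mu) lam := by
    intro i hi hin
    obtain ⟨k, rfl⟩ : ∃ k, i = k + 1 := ⟨i - 1, by omega⟩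
    simp [greedyPat, greedy, sum_Icc_one_succ]
  have hKw : HasWeight n (greedyPat n lam mu) mu := by
    intro j hj hjn
    rw [hrow j hjn, hrow (j - 1) (by omega)]
    exact hw j hj hjn
  have hsum : ∀ j, 1 ≤ j → j ≤ n → ∀ k ≤ j,
      ∑ i ∈ Finset.Icc 1 k, L j i = greedy n lam mu (n - j) k := by
    intro j hj hjn k hk
    obtain ⟨h0, -, hdom⟩ := hG j hj hjn
    refine le_antisymm (hdom k hk) ?_
    obtain ⟨A, hA, hcard, hle⟩ := (hmax _ (greedyPat_isGTPattern hlam) hKb hKw j hj hjn).1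
      (Finset.Icc 1 k) (Finset.Icc_subset_Icc_right hk)
    have hA' := sum_le_sum_initial (hL.1 j hj hjn) A hA
    rw [hcard, Nat.card_Icc, Nat.add_sub_cancel] at hA'
    rw [sum_greedyPat n lam mu j k h0] at hle
    exact hle.trans hA'
  intro j i hi hij hjn
  obtain ⟨k, rfl⟩ : ∃ k, i = k + 1 := ⟨i - 1, by omega⟩
  have h1 := hsum j (by omega) hjn k (by omega)
  have h2 := hsum j (by omega) hjn (k + 1) hij
  rw [sum_Icc_one_succ, h1] at h2
  obtain ⟨a, ha⟩ := greedy_int hlamInt hmuInt (n - j) k (by omega)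
  obtain ⟨b, hb'⟩ := greedy_int hlamInt hmuInt (n - j) (k + 1) (by omega)
  exact ⟨b - a, by push_cast; linarith⟩
end

section
/- Let P: λ^1, λ^2, …, λ^n be a Gelfand–Tsetlin pattern with bounding sequence λ = λ^n and weight μ. Then the trapezoidal area of P equals (1/2)(||λ||^2 − ||μ||^2). -/
/-!
The identity holds row by row. If `lam` has length `m + 1`, `mu` has length `m`, and `a` is the
difference of their sums, then `2 * trapArea = ‖lam‖² - ‖mu‖² - a²` (`two_mul_trapArea`), a
polynomial identity proved by induction on `m`. For consecutive rows of a pattern, `a` is the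
corresponding entry of the weight, so summing over the rows telescopes to `‖λ‖² - ‖μ‖²`
(`two_mul_patTrapArea`).
-/

open Finset

/-- Extending both sequences by one entry adds to the trapezoidal area exactly the terms whose
second index is the new one. -/
lemma trapArea_succ (m : ℕ) (lam mu : ℕ → ℝ) :
    trapArea (m + 2) lam mu = trapArea (m + 1) lam mu +
      (∑ i ∈ Finset.Icc 1 (m + 1), (lam i - mu i)) * (mu (m + 1) - lam (m + 2)) := by
  have h : ∀ i ∈ Finset.Icc 1 (m + 1),
      ∑ j ∈ Finset.Icc i (m + 1), (lam i - mu i) * (mu j - lam (j + 1)) =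
        ∑ j ∈ Finset.Icc i m, (lam i - mu i) * (mu j - lam (j + 1)) +
          (lam i - mu i) * (mu (m + 1) - lam (m + 2)) := fun i hi =>
    Finset.sum_Icc_succ_top (Finset.mem_Icc.mp hi).2 _
  have e : m + 2 - 1 = m + 1 := rfl
  simp only [trapArea, e, Nat.add_sub_cancel]
  -- For `i = m + 1` the inner sum over `Icc i m` is empty.
  rw [Finset.sum_congr rfl h, Finset.sum_add_distrib, ← Finset.sum_mul,
    Finset.sum_Icc_succ_top (Nat.le_add_left 1 m)
      (fun i => ∑ j ∈ Finset.Icc i m, (lam i - mu i) * (mu j - lam (j + 1)))]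
  simp

lemma two_mul_trapArea (m : ℕ) (lam mu : ℕ → ℝ) :
    2 * trapArea (m + 1) lam mu = normSq (m + 1) lam - normSq m mu -
      (∑ i ∈ Finset.Icc 1 (m + 1), lam i - ∑ i ∈ Finset.Icc 1 m, mu i) ^ 2 := by
  induction m with
  | zero => simp [trapArea, normSq]
  | succ m ih =>
    have hl : normSq (m + 2) lam = normSq (m + 1) lam + lam (m + 2) ^ 2 :=
      Finset.sum_Icc_succ_top (Nat.le_add_left 1 (m + 1)) _
    have hm : normSq (m + 1) mu = normSq m mu + mu (m + 1) ^ 2 :=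
      Finset.sum_Icc_succ_top (Nat.le_add_left 1 m) _
    rw [trapArea_succ, mul_add, ih, hl, hm, Finset.sum_sub_distrib,
      Finset.sum_Icc_succ_top (Nat.le_add_left 1 (m + 1)) lam,
      Finset.sum_Icc_succ_top (Nat.le_add_left 1 m) mu]
    ring

lemma two_mul_patTrapArea (n : ℕ) (L : ℕ → ℕ → ℝ) :
    2 * patTrapArea n L =
      normSq n (L n) - normSq n (fun j => rowSum L j - rowSum L (j - 1)) := by
  induction n with
  | zero => simp [patTrapArea, normSq]
  | succ n ih =>
    -- For `n = 0` the added term is the area between row `1` and the empty row, which is `0`.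
    have hp : patTrapArea (n + 1) L = patTrapArea n L + trapArea (n + 1) (L (n + 1)) (L n) := by
      cases n with
      | zero => simp [patTrapArea, trapArea]
      | succ k => exact Finset.sum_Icc_succ_top (Nat.le_add_left 1 k) _
    have hw : normSq (n + 1) (fun j => rowSum L j - rowSum L (j - 1)) =
        normSq n (fun j => rowSum L j - rowSum L (j - 1)) +
          (rowSum L (n + 1) - rowSum L n) ^ 2 :=
      Finset.sum_Icc_succ_top (Nat.le_add_left 1 n) _
    rw [hp, mul_add, ih, two_mul_trapArea, hw]
    simp only [rowSum]
    ring

/-- The trapezoidal area of a GT pattern with bounding sequence `lam`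
and weight `μ` is `(‖lam‖² - ‖μ‖²)/2`. -/
theorem stmt6 (n : ℕ) (L : ℕ → ℕ → ℝ) (lam mu : ℕ → ℝ)
    (hL : IsGTPattern n L) (hb : HasBounding n L lam) (hw : HasWeight n L mu) :
    patTrapArea n L = (normSq n lam - normSq n mu) / 2 := by
  have hl : normSq n (L n) = normSq n lam := Finset.sum_congr rfl fun i hi => by
    rw [hb i (Finset.mem_Icc.mp hi).1 (Finset.mem_Icc.mp hi).2]
  have hm : normSq n (fun j => rowSum L j - rowSum L (j - 1)) = normSq n mu :=
    Finset.sum_congr rfl fun j hj => by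
      simp only [hw j (Finset.mem_Icc.mp hj).1 (Finset.mem_Icc.mp hj).2]
  have h := two_mul_patTrapArea n L
  rw [hl, hm] at h
  linarith
end

section
/- Let λ^n: λ^n_1 ≥ … ≥ λ^n_n be a non-increasing sequence of real numbers and let μ = (μ_1, …, μ_n) ∈ ℝ^n be such that λ^n majorizes μ. Then there exists a unique non-increasing sequence λ^{n−1}: λ^{n−1}_1 ≥ … ≥ λ^{n−1}_{n−1} of real numbers such that: (1) λ^{n−1} interlaces λ^n; (2) λ^{n−1}_1 + … + λ^{n−1}_{n−1} = μ_1 + … + μ_{n−1}; and (3) whenever κ^n: κ^n_1 ≥ … ≥ κ^n_n is a non-increasing real sequence and κ^{n−1} ∈ ℝ^{n−1} satisfy (i) λ^n majorizes κ^n, (ii) κ^n weakly interlaces κ^{n−1}, and (iii) κ^{n−1}_1 + … + κ^{n−1}_{n−1} = μ_1 + … + μ_{n−1}, then λ^{n−1} majorizes κ^{n−1}. -/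
/-!
Write `m = μ_n` and `P_j = λ_1 + ⋯ + λ_j`. Majorization gives `λ_n ≤ m ≤ λ_1`. The row is
`λ'_i = max(λ_i, m) + min(λ_{i+1}, m) - m`; concretely it is `λ` with the two consecutive entries
`λ_k ≥ m ≥ λ_{k+1}` replaced by the single entry `λ_k + λ_{k+1} - m`. Interlacing and monotonicity
are immediate, and since `max(a, m) + min(a, m) = a + m` the partial sums telescope to
`λ'_1 + ⋯ + λ'_j = min(P_j, P_{j+1} - m)` (`sum_distRow`).

Both terms of this minimum bound every `j`-element partial sum of an admissible `κ'`: the bound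
`P_j` comes from the upper weak interlacing inequality, and `P_{j+1} - m` from the lower one applied
to the complementary index set. So `λ'` majorizes every admissible `κ'`.

For uniqueness, interlacing implies weak interlacing, so any two rows with the stated properties are
themselves admissible, majorize each other, and hence have equal partial sums.
-/

open Finset

lemma NonIncr.le {n : ℕ} {x : ℕ → ℝ} (h : NonIncr n x) {i j : ℕ} (hi : 1 ≤ i) (hij : i ≤ j)
    (hj : j ≤ n) : x j ≤ x i := by
  induction j, hij using Nat.le_induction with
  | base => exact le_rfl
  | succ k hk ih => exact (h k (by omega) hj).trans (ih (by omega))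

/-- The largest sum over index sets of a given size is the one over the initial segment. -/
lemma NonIncr.sum_le {n : ℕ} {x : ℕ → ℝ} (h : NonIncr n x) {S : Finset ℕ}
    (hS : S ⊆ Icc 1 n) : ∑ i ∈ S, x i ≤ ∑ i ∈ Icc 1 S.card, x i := by
  set T := Icc 1 S.card with hT
  have hc : S.card ≤ n := by simpa using card_le_card hS
  have hcard : (S \ T).card = (T \ S).card := card_sdiff_comm (by simp [hT])
  -- `x S.card` separates the values on `S \ T` from those on `T \ S`
  have h1 : ∑ i ∈ S \ T, x i ≤ (S \ T).card • x S.card := by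
    refine sum_le_card_nsmul _ _ _ fun i hi => ?_
    have hiS := (mem_sdiff.1 hi).1
    have hiT := (mem_sdiff.1 hi).2
    have := mem_Icc.1 (hS hiS)
    have := card_pos.2 ⟨i, hiS⟩
    rw [hT, mem_Icc] at hiT
    exact h.le (by omega) (by omega) (by omega)
  have h2 : (T \ S).card • x S.card ≤ ∑ i ∈ T \ S, x i := by
    refine card_nsmul_le_sum _ _ _ fun i hi => ?_
    have := mem_Icc.1 (mem_sdiff.1 hi).1
    exact h.le this.1 this.2 hc
  have h3 := sum_inter_add_sum_sdiff S T x
  have h4 := sum_inter_add_sum_sdiff T S x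
  rw [inter_comm] at h4
  rw [hcard] at h1
  linarith

lemma sum_prefix_add_suffix (x : ℕ → ℝ) {k n : ℕ} (hk : k ≤ n) :
    ∑ i ∈ Icc 1 k, x i + ∑ i ∈ Icc (k + 1) n, x i = ∑ i ∈ Icc 1 n, x i := by
  rw [← sum_union]
  · congr 1
    ext i
    simp only [mem_union, mem_Icc]
    omega
  · rw [disjoint_left]
    intro i hi hi'
    simp only [mem_Icc] at hi hi'
    omega

lemma Maj.sum_le {n : ℕ} {x y : ℕ → ℝ} (h : Maj n x y) (hx : NonIncr n x) {B : Finset ℕ}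
    (hB : B ⊆ Icc 1 n) : ∑ i ∈ B, y i ≤ ∑ i ∈ Icc 1 B.card, x i := by
  obtain ⟨A, hA, hcard, hle⟩ := h.1 B hB
  rw [← hcard]
  exact hle.trans (hx.sum_le hA)

/-- The lower counterpart of `Maj.sum_le`, obtained by passing to complements. -/
lemma Maj.le_sum {n : ℕ} {x y : ℕ → ℝ} (h : Maj n x y) (hx : NonIncr n x) {B : Finset ℕ}
    (hB : B ⊆ Icc 1 n) : ∑ i ∈ Icc (n - B.card + 1) n, x i ≤ ∑ i ∈ B, y i := by
  have h1 := h.sum_le hx (B := Icc 1 n \ B) sdiff_subset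
  have h2 := sum_sdiff hB (f := y)
  rw [card_sdiff_of_subset hB, Nat.card_Icc, Nat.add_sub_cancel] at h1
  have h3 := sum_prefix_add_suffix x (Nat.sub_le n B.card)
  have h4 := h.2
  linarith

lemma Maj.refl (n : ℕ) (x : ℕ → ℝ) : Maj n x x :=
  ⟨fun B hB => ⟨B, hB, rfl, le_rfl⟩, rfl⟩

lemma Interlaces.weakly {n : ℕ} {x y : ℕ → ℝ} (hx : NonIncr n x) (h : Interlaces n x y) :
    WeaklyInterlaces n x y := by
  intro S hS _
  have hmem : ∀ i ∈ S, 1 ≤ i ∧ i + 1 ≤ n := fun i hi => by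
    have := mem_Icc.1 (hS hi)
    omega
  constructor
  · refine (sum_le_sum fun i hi => (h i (hmem i hi).1 (hmem i hi).2).1).trans (hx.sum_le ?_)
    exact fun i hi => mem_Icc.2 ⟨(hmem i hi).1, by have := hmem i hi; omega⟩
  · refine le_trans ?_ (sum_le_sum fun i hi => (h i (hmem i hi).1 (hmem i hi).2).2)
    have h1 := (Maj.refl n x).le_sum hx (B := S.map (addRightEmbedding 1)) (by
      intro j hj
      obtain ⟨i, hi, rfl⟩ := mem_map.1 hj
      exact mem_Icc.2 ⟨by simp, (hmem i hi).2⟩)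
    simpa using h1

/-- The distinguished row: `λ` with the two consecutive entries around `m` replaced by their sum
minus `m`, written without reference to the position of `m`. -/
noncomputable def distRow (lam : ℕ → ℝ) (m : ℝ) (i : ℕ) : ℝ :=
  max (lam i) m + min (lam (i + 1)) m - m

lemma sum_distRow (lam : ℕ → ℝ) (m : ℝ) (h : m ≤ lam 1) (j : ℕ) :
    ∑ i ∈ Icc 1 j, distRow lam m i =
      min (∑ i ∈ Icc 1 j, lam i) (∑ i ∈ Icc 1 (j + 1), lam i - m) := by
  have key : ∑ i ∈ Icc 1 j, distRow lam m i
      = ∑ i ∈ Icc 1 j, lam i + min (lam (j + 1)) m - m := by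
    induction j with
    | zero => simp [h]
    | succ k ih =>
      rw [sum_Icc_succ_top (by omega), sum_Icc_succ_top (by omega), ih, distRow]
      have := max_add_min (lam (k + 1)) m
      linarith
  rw [key, sum_Icc_succ_top (by omega)]
  rcases le_total (lam (j + 1)) m with h | h
  · rw [min_eq_left h, min_eq_right (by linarith)]
  · rw [min_eq_right h, min_eq_left (by linarith)]
    ring

lemma distRow_nonIncr {n : ℕ} {lam : ℕ → ℝ} (h : NonIncr n lam) (m : ℝ) :
    NonIncr (n - 1) (distRow lam m) := by
  intro i hi hin
  have h1 := max_le_max_right m (h i hi (by omega))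
  have h2 := min_le_min_right m (h (i + 1) (by omega) (by omega))
  unfold distRow
  linarith

lemma distRow_interlaces {n : ℕ} {lam : ℕ → ℝ} (h : NonIncr n lam) (m : ℝ) :
    Interlaces n lam (distRow lam m) := by
  intro i hi hin
  have h1 := min_le_min_right m (h i hi hin)
  have h2 := max_le_max_right m (h i hi hin)
  have h3 := max_add_min (lam i) m
  have h4 := max_add_min (lam (i + 1)) m
  unfold distRow
  constructor <;> linarith

lemma distRow_maj {N : ℕ} {lam mu kap kap' : ℕ → ℝ} (hlam : NonIncr (N + 1) lam)
    (hmaj : Maj (N + 1) lam mu) (hm : mu (N + 1) ≤ lam 1)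
    (hrow : ∑ i ∈ Icc 1 N, distRow lam (mu (N + 1)) i = ∑ i ∈ Icc 1 N, mu i)
    (hlk : Maj (N + 1) lam kap) (hw : WeaklyInterlaces (N + 1) kap kap')
    (hsum : ∑ i ∈ Icc 1 N, kap' i = ∑ i ∈ Icc 1 N, mu i) :
    Maj N (distRow lam (mu (N + 1))) kap' := by
  refine ⟨fun B hB => ?_, hrow.trans hsum.symm⟩
  have hc : B.card ≤ N := by simpa using card_le_card hB
  refine ⟨Icc 1 B.card, Icc_subset_Icc_right hc, by simp, ?_⟩
  rw [sum_distRow _ _ hm]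
  apply le_min
  · rcases B.eq_empty_or_nonempty with rfl | hne
    · simp
    · have h1 := (hw B hB hne).1
      have h2 := hlk.sum_le hlam (B := Icc 1 B.card) (Icc_subset_Icc_right (by omega))
      rw [Nat.card_Icc, Nat.add_sub_cancel] at h2
      exact h1.trans h2
  · have htot := hmaj.2
    rw [sum_Icc_succ_top (f := mu) (by omega)] at htot
    have h1 := sum_sdiff hB (f := kap')
    have h2 := sum_prefix_add_suffix lam (show B.card + 1 ≤ N + 1 by omega)
    suffices h : ∑ i ∈ Icc (B.card + 1 + 1) (N + 1), lam i ≤ ∑ i ∈ Icc 1 N \ B, kap' i by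
      linarith
    have hcard : (Icc 1 N \ B).card = N - B.card := by
      rw [card_sdiff_of_subset hB, Nat.card_Icc, Nat.add_sub_cancel]
    rcases (Icc 1 N \ B).eq_empty_or_nonempty with he | hne
    · rw [he, card_empty] at hcard
      rw [he, Icc_eq_empty (by omega), sum_empty, sum_empty]
    · have h3 := (hw (Icc 1 N \ B) sdiff_subset hne).2
      rw [hcard, show N + 1 - (N - B.card) + 1 = B.card + 1 + 1 by omega] at h3
      have h4 := hlk.le_sum hlam (B := Icc (B.card + 1 + 1) (N + 1))
        (Icc_subset_Icc_left (by omega))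
      rw [Nat.card_Icc, show N + 1 - (N + 1 + 1 - (B.card + 1 + 1)) + 1 = B.card + 1 + 1 by omega]
        at h4
      exact h4.trans h3

lemma Maj.antisymm {n : ℕ} {x y : ℕ → ℝ} (hx : NonIncr n x) (hy : NonIncr n y)
    (hxy : Maj n x y) (hyx : Maj n y x) {i : ℕ} (hi : 1 ≤ i) (hin : i ≤ n) : x i = y i := by
  have key : ∀ j ≤ n, ∑ i ∈ Icc 1 j, x i = ∑ i ∈ Icc 1 j, y i := by
    intro j hj
    have h1 := hxy.sum_le hx (B := Icc 1 j) (Icc_subset_Icc_right hj)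
    have h2 := hyx.sum_le hy (B := Icc 1 j) (Icc_subset_Icc_right hj)
    rw [Nat.card_Icc, Nat.add_sub_cancel] at h1 h2
    exact le_antisymm h2 h1
  obtain ⟨k, rfl⟩ : ∃ k, i = k + 1 := ⟨i - 1, by omega⟩
  have h1 := key (k + 1) hin
  rw [sum_Icc_succ_top (by omega), sum_Icc_succ_top (by omega), key k (by omega)] at h1
  linarith

/-- Existence and uniqueness of the distinguished row `λ^{n-1}`. -/
theorem stmt9 (n : ℕ) (lam mu : ℕ → ℝ) (hlam : NonIncr n lam) (hmaj : Maj n lam mu) :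
    ∃ lam' : ℕ → ℝ,
      (NonIncr (n - 1) lam' ∧ Interlaces n lam lam' ∧
        (∑ i ∈ Finset.Icc 1 (n - 1), lam' i = ∑ i ∈ Finset.Icc 1 (n - 1), mu i) ∧
        (∀ kap kap' : ℕ → ℝ, NonIncr n kap → Maj n lam kap →
          WeaklyInterlaces n kap kap' →
          (∑ i ∈ Finset.Icc 1 (n - 1), kap' i = ∑ i ∈ Finset.Icc 1 (n - 1), mu i) →
          Maj (n - 1) lam' kap')) ∧
      ∀ lam'' : ℕ → ℝ,
        (NonIncr (n - 1) lam'' ∧ Interlaces n lam lam'' ∧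
          (∑ i ∈ Finset.Icc 1 (n - 1), lam'' i = ∑ i ∈ Finset.Icc 1 (n - 1), mu i) ∧
          (∀ kap kap' : ℕ → ℝ, NonIncr n kap → Maj n lam kap →
            WeaklyInterlaces n kap kap' →
            (∑ i ∈ Finset.Icc 1 (n - 1), kap' i = ∑ i ∈ Finset.Icc 1 (n - 1), mu i) →
            Maj (n - 1) lam'' kap')) →
        ∀ i, 1 ≤ i → i ≤ n - 1 → lam'' i = lam' i := by
  rcases n with _ | N
  · exact ⟨lam, ⟨fun i hi h => by omega, fun i hi h => by omega, by simp,
      fun kap kap' _ _ _ _ => ⟨fun B hB => ⟨B, hB, rfl, by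
        have : B = ∅ := by simpa using hB
        simp [this]⟩, by simp⟩⟩, fun _ _ i hi h => by omega⟩
  rw [Nat.add_sub_cancel]
  have hsub : ({N + 1} : Finset ℕ) ⊆ Icc 1 (N + 1) := by simp
  have hm : mu (N + 1) ≤ lam 1 := by simpa using hmaj.sum_le hlam hsub
  have hm' : lam (N + 1) ≤ mu (N + 1) := by simpa using hmaj.le_sum hlam hsub
  have hrow : ∑ i ∈ Icc 1 N, distRow lam (mu (N + 1)) i = ∑ i ∈ Icc 1 N, mu i := by
    have htot := hmaj.2
    rw [sum_Icc_succ_top (by omega), sum_Icc_succ_top (by omega)] at htot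
    rw [sum_distRow _ _ hm, sum_Icc_succ_top (by omega), min_eq_right (by linarith)]
    linarith
  have hnon : NonIncr N (distRow lam (mu (N + 1))) := distRow_nonIncr hlam _
  have hint := distRow_interlaces hlam (mu (N + 1))
  have hbest : ∀ kap kap' : ℕ → ℝ, NonIncr (N + 1) kap → Maj (N + 1) lam kap →
      WeaklyInterlaces (N + 1) kap kap' → ∑ i ∈ Icc 1 N, kap' i = ∑ i ∈ Icc 1 N, mu i →
      Maj N (distRow lam (mu (N + 1))) kap' :=
    fun kap kap' _ h2 h3 h4 => distRow_maj hlam hmaj hm hrow h2 h3 h4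
  refine ⟨distRow lam (mu (N + 1)), ⟨hnon, hint, hrow, hbest⟩, ?_⟩
  rintro lam'' ⟨hnon'', hint'', hrow'', hbest''⟩ i hi hin
  exact Maj.antisymm hnon'' hnon
    (hbest'' lam _ hlam (Maj.refl _ _) (hint.weakly hlam) hrow)
    (hbest lam _ hlam (Maj.refl _ _) (hint''.weakly hlam) hrow'') hi hin
end
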